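/- (Variational principle for t-entropy) For every α-invariant measure μ ∈ M_α(X, m), the t-entropy satisfies τ(μ) = inf over φ ∈ L^∞(X, m) of ( λ(φ) − μ[φ] ). -/

import Mathlib

open MeasureTheory Filter
open scoped ENNReal NNReal

noncomputable section

/-- The Birkhoff sum `S_n φ (x) = φ(x) + φ(α x) + ⋯ + φ(α^{n-1} x)`. -/
def birkhoff {X : Type*} (α : X → X) (φ : X → ℝ) (n : ℕ) (x : X) : ℝ :=
  ∑ i ∈ Finset.range n, φ (α^[i] x)

/-- Boundedness of the shift operator `A f = f ∘ α` on `L¹(X, m)`: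
there is `C > 0` with `m (α⁻¹ G) ≤ C · m G` for all measurable `G`. -/
def ShiftBounded {X : Type*} [MeasurableSpace X] (m : Measure X) (α : X → X) : Prop :=
  ∃ C : ℝ≥0, 0 < C ∧ ∀ G : Set X, MeasurableSet G → m (α ⁻¹' G) ≤ (C : ℝ≥0∞) * m G

/-- The operator norm `‖(e^ψ A^s)^k‖` of the `k`-th power of the weighted shift operator
`e^ψ A^s` (with base shift `α^[s]`) acting on `L¹(X, m)`, computed as the supremum of
`‖(e^ψ A^s)^k f‖₁` over `f` with `‖f‖₁ = 1`. -/
def weightedOpNorm {X : Type*} [MeasurableSpace X] (m : Measure X) (α : X → X) (s : ℕ)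
    (ψ : X → ℝ) (k : ℕ) : ℝ :=
  sSup {r : ℝ | ∃ f : X → ℝ, Integrable f m ∧ (∫ x, |f x| ∂m) = 1 ∧
    r = ∫ x, Real.exp (∑ j ∈ Finset.range k, ψ (α^[s * j] x)) * |f (α^[s * k] x)| ∂m}

/-- `λ(ψ, A^s)`: the logarithm of the spectral radius of `e^ψ A^s` on `L¹(X, m)`. -/
def spectralPotentialBase {X : Type*} [MeasurableSpace X] (m : Measure X) (α : X → X)
    (s : ℕ) (ψ : X → ℝ) : ℝ :=
  limUnder atTop fun k : ℕ => Real.log (weightedOpNorm m α s ψ k) / (k : ℝ)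

/-- The spectral potential `λ(φ) = lim (1/n) ln ‖A_φⁿ‖`. -/
def spectralPotential {X : Type*} [MeasurableSpace X] (m : Measure X) (α : X → X)
    (φ : X → ℝ) : ℝ :=
  spectralPotentialBase m α 1 φ

/-- A functional on `L^∞(X, m)` is positive if it is nonnegative on nonnegative functions. -/
def IsPositiveFunctional {X : Type*} [MeasurableSpace X] (m : Measure X)
    (μ : Lp ℝ ⊤ m → ℝ) : Prop :=
  ∀ φ : Lp ℝ ⊤ m, (0 : X → ℝ) ≤ᵐ[m] ⇑φ → 0 ≤ μ φ

/-- A functional on `L^∞(X, m)` is normalized if its value on the unit function is `1`. -/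
def IsNormalizedFunctional {X : Type*} [MeasurableSpace X] (m : Measure X)
    (μ : Lp ℝ ⊤ m → ℝ) : Prop :=
  ∀ φ : Lp ℝ ⊤ m, ⇑φ =ᵐ[m] (fun _ => (1 : ℝ)) → μ φ = 1

/-- A functional `μ` on `L^∞(X, m)` is `α`-invariant if `μ[f ∘ α] = μ[f]`. -/
def IsInvariantFunctional {X : Type*} [MeasurableSpace X] (m : Measure X) (α : X → X)
    (μ : Lp ℝ ⊤ m → ℝ) : Prop :=
  ∀ φ ψ : Lp ℝ ⊤ m, ⇑ψ =ᵐ[m] (fun x => φ (α x)) → μ ψ = μ φ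

/-- `μ ∈ M_α(X, m)`: positive, normalized and `α`-invariant. -/
def MemMalpha {X : Type*} [MeasurableSpace X] (m : Measure X) (α : X → X)
    (μ : Lp ℝ ⊤ m → ℝ) : Prop :=
  IsPositiveFunctional m μ ∧ IsNormalizedFunctional m μ ∧ IsInvariantFunctional m α μ

/-- A measurable partition of unity on `X` made of nonnegative elements of `L^∞(X, m)`
summing to `1`. -/
structure PartUnity {X : Type*} [MeasurableSpace X] (m : Measure X) where
  k : ℕ
  g : Fin k → Lp ℝ ⊤ m
  nonneg : ∀ i, (0 : X → ℝ) ≤ᵐ[m] ⇑(g i)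
  sum_one : ∀ᵐ x ∂m, (∑ i, (g i : Lp ℝ ⊤ m) x) = 1

/-- The summand `a · ln (r / a)` with the conventions: it is `0` if `a = 0`, and `-∞` if
`a ≠ 0` and `r = 0`. -/
def entTerm (a r : ℝ) : EReal :=
  if a = 0 then 0 else if r = 0 then ⊥ else ((a * Real.log (r / a) : ℝ) : EReal)

/-- `τₙ(μ, D)`. -/
def tauN {X : Type*} [MeasurableSpace X] (m : Measure X) (α : X → X)
    (μ : Lp ℝ ⊤ m → ℝ) (n : ℕ) (D : PartUnity m) : EReal :=
  sSup {r : EReal | ∃ f : X → ℝ, Integrable f m ∧ (∫ x, |f x| ∂m) = 1 ∧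
    r = ∑ i, entTerm (μ (D.g i)) (∫ x, (D.g i : Lp ℝ ⊤ m) x * |f (α^[n] x)| ∂m)}

/-- The t-entropy `τ(μ) = inf_{n, D} τₙ(μ, D) / n`. -/
def tEntropy {X : Type*} [MeasurableSpace X] (m : Measure X) (α : X → X)
    (μ : Lp ℝ ⊤ m → ℝ) : EReal :=
  ⨅ (n : ℕ) (_ : 0 < n) (D : PartUnity m), (((n : ℝ)⁻¹ : ℝ) : EReal) * tauN m α μ n D

/-- The t-entropy extended by `τ(μ) = -∞` outside `M_α(X, m)`. -/
def tEntropyExt {X : Type*} [MeasurableSpace X] (m : Measure X) (α : X → X)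
    (μ : Lp ℝ ⊤ m → ℝ) : EReal :=
  @ite _ (MemMalpha m α μ) (Classical.dec _) (tEntropy m α μ) ⊥

/-!
For a fixed power `n` and a fixed partition of unity `D = {g₁, …, g_k}`, Lagrange duality in `ℝᵏ`
gives `τₙ(μ, D) = inf_t (-∑ᵢ tᵢ μ[gᵢ])`, where `t` runs over the exponents for which the operator
`f ↦ (∑ᵢ exp tᵢ · gᵢ) · (f ∘ αⁿ)` is a contraction of `L¹(X, m)`. The two inequalities of the
variational principle come from comparing such operators with the powers of `A_φ`.

* If `‖A_φⁿ‖ ≤ exp (n c)`, a step function just below the Birkhoff sum `S_n φ`, lowered by `n c`,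
  supplies admissible exponents on the partition into its level sets, so `τ(μ) ≤ c - μ[φ]`.
* Conversely, given admissible `t`, put `φ = n⁻¹ ∑ᵢ tᵢ gᵢ`. By convexity of `exp`, the operator
  `f ↦ exp (n φ) · (f ∘ αⁿ)` is again a contraction, and writing `S_{nk} φ` as the average over
  `j < n` of the sums of `n φ` along `αⁿ` started at `αʲ x` bounds `‖A_φ^{nk}‖` uniformly in `k`.
  Hence `λ(φ) ≤ 0`, and `λ(φ) - μ[φ] ≤ -n⁻¹ ∑ᵢ tᵢ μ[gᵢ]`.

Since `λ(φ)` may be `-∞`, the set of all bounds `c` with `‖A_φⁿ‖ ≤ exp (n c)` for some `n` stands in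
for its infimum `λ(φ)`.
-/

section FiniteDuality

lemma toEReal_sum {ι : Type*} (s : Finset ι) (f : ι → ℝ) :
    ((∑ i ∈ s, f i : ℝ) : EReal) = ∑ i ∈ s, (f i : EReal) :=
  map_sum (⟨⟨Real.toEReal, EReal.coe_zero⟩, EReal.coe_add⟩ : ℝ →+ EReal) f s

lemma entTerm_le {p r : ℝ} (hp : 0 ≤ p) (hr : 0 ≤ r) (v : ℝ) :
    entTerm p r ≤ ((Real.exp v * r - p - p * v : ℝ) : EReal) := by
  unfold entTerm
  split_ifs with hp0 hr0
  · subst hp0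
    exact_mod_cast (by simpa using mul_nonneg (Real.exp_nonneg v) hr)
  · exact bot_le
  · have hp' : 0 < p := hp.lt_of_ne' hp0
    have hrp : 0 < r / p := div_pos (hr.lt_of_ne' hr0) hp'
    have hlog := Real.log_le_sub_one_of_pos (mul_pos (Real.exp_pos v) hrp)
    rw [Real.log_mul (Real.exp_ne_zero v) hrp.ne', Real.log_exp] at hlog
    refine EReal.coe_le_coe ?_
    calc p * Real.log (r / p) ≤ p * (Real.exp v * (r / p) - 1 - v) := by gcongr; linarith
      _ = Real.exp v * r - p - p * v := by field_simp

variable {ι : Type*} [Fintype ι] {p : ι → ℝ}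

lemma sum_entTerm_le {r t : ι → ℝ} (hp : 0 ≤ p) (hr : 0 ≤ r) (hp1 : ∑ i, p i = 1)
    (ht : ∑ i, Real.exp (t i) * r i ≤ 1) :
    ∑ i, entTerm (p i) (r i) ≤ ((-∑ i, p i * t i : ℝ) : EReal) := by
  calc ∑ i, entTerm (p i) (r i)
      ≤ ∑ i, ((Real.exp (t i) * r i - p i - p i * t i : ℝ) : EReal) :=
        Finset.sum_le_sum fun i _ ↦ entTerm_le (hp i) (hr i) (t i)
    _ = ((∑ i, (Real.exp (t i) * r i - p i - p i * t i) : ℝ) : EReal) :=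
        (toEReal_sum _ _).symm
    _ ≤ _ := by
        refine EReal.coe_le_coe ?_
        rw [Finset.sum_sub_distrib, Finset.sum_sub_distrib, hp1]
        linarith

lemma sum_entTerm_of_ne_zero {r : ι → ℝ} (hr : ∀ i, p i ≠ 0 → r i ≠ 0) :
    ∑ i, entTerm (p i) (r i) = ((∑ i, p i * Real.log (r i / p i) : ℝ) : EReal) := by
  rw [toEReal_sum]
  refine Finset.sum_congr rfl fun i _ ↦ ?_
  by_cases hi : p i = 0
  · simp [entTerm, hi]
  · simp [entTerm, hi, hr i hi]

/-- The first-order condition at a maximiser of the concave function `r ↦ ∑ i, p i * log (r i)`. -/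
lemma exists_forall_sum_mul_div_le {S : Set (ι → ℝ)} (hS : IsCompact S) (hconv : Convex ℝ S)
    (hne : S.Nonempty) (hpos : ∀ r ∈ S, ∀ i, p i ≠ 0 → r i ≠ 0) :
    ∃ s ∈ S, ∀ r ∈ S, ∑ i, p i * (r i / s i) ≤ ∑ i, p i := by
  let F : (ι → ℝ) → ℝ := fun r ↦ ∑ i, p i * Real.log (r i)
  have hderiv (s) (hs : s ∈ S) : HasFDerivAt F
      (∑ i, (p i * (s i)⁻¹) • ContinuousLinearMap.proj (R := ℝ) (φ := fun _ : ι ↦ ℝ) i) s := by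
    refine .fun_sum fun i _ ↦ ?_
    by_cases hi : p i = 0
    · simpa [hi] using hasFDerivAt_const (0 : ℝ) s
    · simpa [smul_smul] using ((hasFDerivAt_apply i s).log (hpos s hs i hi)).const_mul (p i)
  obtain ⟨s, hs, hmax⟩ := hS.exists_isMaxOn hne fun s hs ↦
    (hderiv s hs).continuousAt.continuousWithinAt
  refine ⟨s, hs, fun r hr ↦ ?_⟩
  have hle := hmax.localize.hasFDerivWithinAt_nonpos (hderiv s hs).hasFDerivWithinAt
    (sub_mem_posTangentConeAt_of_segment_subset (hconv.segment_subset hs hr))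
  have hsum : ∑ i, (p i * (r i / s i) - p i) ≤ 0 := by
    refine le_of_eq_of_le ?_ hle
    simp only [sum_apply, smul_apply, ContinuousLinearMap.proj_apply, Pi.sub_apply, smul_eq_mul]
    refine Finset.sum_congr rfl fun i _ ↦ ?_
    by_cases hi : p i = 0
    · simp [hi]
    · have := hpos s hs i hi
      field_simp
  simpa [Finset.sum_sub_distrib] using hsum

variable {R : Set (ι → ℝ)} {c ε : ℝ}

lemma exists_pos_forall_sum_le_of_isBounded (hbdd : Bornology.IsBounded R) :
    ∃ M > 0, ∀ r ∈ R, ∑ i, r i ≤ M := by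
  obtain ⟨K, hK0, hK⟩ := hbdd.exists_pos_norm_le
  refine ⟨Fintype.card ι * K + 1, by positivity, fun r hr ↦ ?_⟩
  calc ∑ i, r i ≤ ∑ i, ‖r i‖ := Finset.sum_le_sum fun i _ ↦ le_abs_self (r i)
    _ ≤ Fintype.card ι • ‖r‖ := Pi.sum_norm_apply_le_norm r
    _ ≤ Fintype.card ι * K + 1 := by
        rw [nsmul_eq_mul]
        exact (mul_le_mul_of_nonneg_left (hK r hr) (Nat.cast_nonneg _)).trans (by linarith)

lemma sum_mul_log_smul (hp1 : ∑ i, p i = 1) {x : ι → ℝ} (hx : ∀ i, p i ≠ 0 → x i ≠ 0) {a : ℝ}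
    (ha : a ≠ 0) :
    ∑ i, p i * Real.log ((a • x) i / p i) = Real.log a + ∑ i, p i * Real.log (x i / p i) := by
  rw [← one_mul (Real.log a), ← hp1, Finset.sum_mul, ← Finset.sum_add_distrib]
  refine Finset.sum_congr rfl fun i _ ↦ ?_
  by_cases hi : p i = 0
  · simp [hi]
  · rw [Pi.smul_apply, smul_eq_mul, mul_div_assoc, Real.log_mul ha (div_ne_zero (hx i hi) hi),
      mul_add]

lemma sum_mul_log_add_smul_le (hconv : Convex ℝ R) (hp1 : ∑ i, p i = 1)
    (hc : ∀ r ∈ R, (∀ i, p i ≠ 0 → r i ≠ 0) → ∑ i, p i * Real.log (r i / p i) ≤ c)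
    {r r₀ : ι → ℝ} (hr : r ∈ R) (hr₀ : r₀ ∈ R) (hε : 0 ≤ ε)
    (hne : ∀ i, p i ≠ 0 → (r + (Real.exp ε - 1) • r₀) i ≠ 0) :
    ∑ i, p i * Real.log ((r + (Real.exp ε - 1) • r₀) i / p i) ≤ c + ε := by
  have hη : 0 ≤ Real.exp ε - 1 := sub_nonneg.2 (Real.one_le_exp hε)
  have hexp : (Real.exp ε)⁻¹ ≠ 0 := inv_ne_zero (Real.exp_ne_zero ε)
  have hmem : (Real.exp ε)⁻¹ • (r + (Real.exp ε - 1) • r₀) ∈ R := by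
    rw [smul_add, smul_smul]
    refine hconv hr hr₀ (by positivity) (by positivity) ?_
    rw [← mul_one_add, add_sub_cancel, inv_mul_cancel₀ (Real.exp_ne_zero ε)]
  have hle := hc _ hmem fun i hi ↦ mul_ne_zero hexp (hne i hi)
  rw [sum_mul_log_smul hp1 hne hexp, Real.log_inv, Real.log_exp] at hle
  linarith

open scoped Pointwise in
lemma exists_weights_of_pos (hconv : Convex ℝ R) (hbdd : Bornology.IsBounded R)
    (hR : ∀ r ∈ R, 0 ≤ r) (hp : 0 ≤ p) (hp1 : ∑ i, p i = 1)
    (hc : ∀ r ∈ R, (∀ i, p i ≠ 0 → r i ≠ 0) → ∑ i, p i * Real.log (r i / p i) ≤ c)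
    {r₀ : ι → ℝ} (hr₀ : r₀ ∈ R) (hr₀p : ∀ i, p i ≠ 0 → 0 < r₀ i) (hε : 0 < ε) :
    ∃ s : ι → ℝ, (∀ i, p i ≠ 0 → 0 < s i) ∧ (∀ r ∈ R, ∑ i, p i * (r i / s i) ≤ 1) ∧
      ∑ i, p i * Real.log (s i / p i) ≤ c + ε := by
  let η : ℝ := Real.exp ε - 1
  have hη : 0 < η := sub_pos.2 (Real.one_lt_exp_iff.2 hε)
  let R' : Set (ι → ℝ) := (fun r ↦ r + η • r₀) '' R
  have hfloor : ∀ x ∈ closure R', ∀ i, η * r₀ i ≤ x i := fun x hx i ↦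
    le_on_closure (f := fun _ ↦ η * r₀ i) (g := fun x ↦ x i)
      (by rintro _ ⟨r, hr, rfl⟩; simpa using hR r hr i) (by fun_prop) (by fun_prop) hx
  have hfloor_pos : ∀ x ∈ closure R', ∀ i, p i ≠ 0 → 0 < x i := fun x hx i hi ↦
    (mul_pos hη (hr₀p i hi)).trans_le (hfloor x hx i)
  have hentropy' : ∀ x ∈ R', ∑ i, p i * Real.log (x i / p i) ≤ c + ε := by
    rintro _ ⟨r, hr, rfl⟩
    exact sum_mul_log_add_smul_le hconv hp1 hc hr hr₀ hε.le fun i hi ↦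
      (hfloor_pos _ (subset_closure ⟨r, hr, rfl⟩) i hi).ne'
  have hentropy : ∀ x ∈ closure R', ∑ i, p i * Real.log (x i / p i) ≤ c + ε := fun x hx ↦ by
    refine le_on_closure (f := fun x : ι → ℝ ↦ ∑ i, p i * Real.log (x i / p i)) hentropy'
      (continuousOn_finsetSum _ fun i _ ↦ ?_) continuousOn_const hx
    by_cases hi : p i = 0
    · simpa [hi] using continuousOn_const
    · exact continuousOn_const.mul (ContinuousOn.log (by fun_prop) fun x hx ↦
        (div_ne_zero (hfloor_pos x hx i hi).ne' hi))
  have hR'_eq : R' = R + {η • r₀} := Set.add_singleton.symm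
  have hcompact : IsCompact (closure R') :=
    (hR'_eq ▸ hbdd.add Bornology.isBounded_singleton).isCompact_closure
  have hconv' : Convex ℝ (closure R') := (hR'_eq ▸ hconv.add (convex_singleton _)).closure
  obtain ⟨s, hs, hmax⟩ := exists_forall_sum_mul_div_le hcompact hconv'
    ⟨_, subset_closure ⟨r₀, hr₀, rfl⟩⟩ fun x hx i hi ↦ (hfloor_pos x hx i hi).ne'
  refine ⟨s, hfloor_pos s hs, fun r hr ↦ ?_, hentropy s hs⟩
  calc ∑ i, p i * (r i / s i) ≤ ∑ i, p i * ((r + η • r₀) i / s i) := by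
        refine Finset.sum_le_sum fun i _ ↦ ?_
        by_cases hi : p i = 0
        · simp [hi]
        · have := hp i
          have := hfloor_pos s hs i hi
          gcongr
          simpa using mul_nonneg hη.le (hR r₀ hr₀ i)
    _ ≤ 1 := hp1 ▸ hmax _ (subset_closure ⟨r, hr, rfl⟩)

lemma exists_exp_weights_of_weights (hbdd : Bornology.IsBounded R) (hp : 0 ≤ p)
    (hp1 : ∑ i, p i = 1) {w : ι → ℝ} (hw : 0 ≤ w) (hwp : ∀ i, p i ≠ 0 → 0 < w i)
    (hwR : ∀ r ∈ R, ∑ i, w i * r i ≤ 1) (hε : 0 < ε) :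
    ∃ t : ι → ℝ, (∀ r ∈ R, ∑ i, Real.exp (t i) * r i ≤ 1) ∧
      -∑ i, p i * t i ≤ -∑ i, p i * Real.log (w i) + ε := by
  obtain ⟨M, hM0, hM⟩ := exists_pos_forall_sum_le_of_isBounded hbdd
  let δ := ε / M
  have hδ : 0 < δ := div_pos hε hM0
  have hwδ (i) : 0 < w i + δ := add_pos_of_nonneg_of_pos (hw i) hδ
  refine ⟨fun i ↦ Real.log (w i + δ) - ε, fun r hr ↦ ?_, ?_⟩
  · calc ∑ i, Real.exp (Real.log (w i + δ) - ε) * r i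
        = Real.exp (-ε) * (∑ i, w i * r i + δ * ∑ i, r i) := by
          simp only [sub_eq_add_neg, Real.exp_add, Real.exp_log (hwδ _), Finset.mul_sum,
            ← Finset.sum_add_distrib]
          exact Finset.sum_congr rfl fun i _ ↦ by ring
      _ ≤ Real.exp (-ε) * (1 + ε) := by
          gcongr
          · exact hwR r hr
          · calc δ * ∑ i, r i ≤ δ * M := by gcongr; exact hM r hr
              _ = ε := div_mul_cancel₀ ε hM0.ne'
      _ ≤ Real.exp (-ε) * Real.exp ε := by gcongr; linarith [Real.add_one_le_exp ε]
      _ = 1 := by rw [← Real.exp_add, neg_add_cancel, Real.exp_zero]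
  · have hlog : ∑ i, p i * Real.log (w i) ≤ ∑ i, p i * Real.log (w i + δ) := by
      refine Finset.sum_le_sum fun i _ ↦ ?_
      by_cases hi : p i = 0
      · simp [hi]
      · have := hp i
        have := hwp i hi
        gcongr
        linarith
    simp only [mul_sub, Finset.sum_sub_distrib, ← Finset.sum_mul, hp1]
    linarith

lemma exists_exp_weights_of_vanishing (hbdd : Bornology.IsBounded R) (hp1 : ∑ i, p i = 1)
    {i : ι} (hi : p i ≠ 0) (hRi : ∀ r ∈ R, r i = 0) (c : ℝ) :
    ∃ t : ι → ℝ, (∀ r ∈ R, ∑ j, Real.exp (t j) * r j ≤ 1) ∧ -∑ j, p j * t j ≤ c := by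
  classical
  obtain ⟨M, hM0, hM⟩ := exists_pos_forall_sum_le_of_isBounded hbdd
  let A : ℝ := (Real.log M - c) / p i
  refine ⟨fun j ↦ (Pi.single i A : ι → ℝ) j - Real.log M, fun r hr ↦ ?_, ?_⟩
  · calc ∑ j, Real.exp ((Pi.single i A : ι → ℝ) j - Real.log M) * r j
        = ∑ j, M⁻¹ * r j := by
          refine Finset.sum_congr rfl fun j _ ↦ ?_
          obtain rfl | hj := eq_or_ne j i
          · simp [hRi r hr]
          · simp [hj, Real.exp_neg, Real.exp_log hM0]
      _ ≤ 1 := by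
          rw [← Finset.mul_sum, inv_mul_le_one₀ hM0]
          exact hM r hr
  · have hA : p i * A = Real.log M - c := mul_div_cancel₀ _ hi
    simp [mul_sub, Finset.sum_sub_distrib, ← Finset.sum_mul, hp1, Pi.single_apply, hA]

/-- Minimax in disguise: for fixed `r`, the infimum of `log (∑ i, exp (t i) * r i) - ∑ i, p i * t i`
over `t` is `∑ i, entTerm (p i) (r i)`; here the same `t` serves all `r ∈ R`. -/
lemma exists_exp_weights (hconv : Convex ℝ R) (hbdd : Bornology.IsBounded R)
    (hR : ∀ r ∈ R, 0 ≤ r) (hp : 0 ≤ p) (hp1 : ∑ i, p i = 1)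
    (hc : ∀ r ∈ R, ∑ i, entTerm (p i) (r i) ≤ (c : EReal)) (hε : 0 < ε) :
    ∃ t : ι → ℝ, (∀ r ∈ R, ∑ i, Real.exp (t i) * r i ≤ 1) ∧ -∑ i, p i * t i ≤ c + ε := by
  by_cases hvanish : ∃ i, p i ≠ 0 ∧ ∀ r ∈ R, r i = 0
  · obtain ⟨i, hi, hRi⟩ := hvanish
    exact exists_exp_weights_of_vanishing hbdd hp1 hi hRi (c + ε)
  push Not at hvanish
  obtain ⟨r₁, hr₁⟩ : R.Nonempty := by
    obtain ⟨i, -, hi⟩ := Finset.exists_ne_zero_of_sum_ne_zero (hp1.trans_ne one_ne_zero)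
    exact (hvanish i hi).imp fun r hr ↦ hr.1
  have hwitness (i) : ∃ r ∈ R, p i ≠ 0 → r i ≠ 0 := by
    by_cases hi : p i = 0
    · exact ⟨r₁, hr₁, fun h ↦ absurd hi h⟩
    · exact (hvanish i hi).imp fun r hr ↦ ⟨hr.1, fun _ ↦ hr.2⟩
  choose r hrR hr using hwitness
  have hr₀p (i) (hi : p i ≠ 0) : 0 < (∑ j, p j • r j) i := by
    rw [Finset.sum_apply]
    refine Finset.sum_pos' (fun j _ ↦ mul_nonneg (hp j) (hR _ (hrR j) i)) ⟨i, Finset.mem_univ i, ?_⟩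
    exact mul_pos ((hp i).lt_of_ne' hi) ((hR _ (hrR i) i).lt_of_ne' (hr i hi))
  obtain ⟨s, hs, hsR, hsc⟩ := exists_weights_of_pos hconv hbdd hR hp hp1 (c := c)
    (fun x hx hxp ↦ EReal.coe_le_coe_iff.1 (sum_entTerm_of_ne_zero hxp ▸ hc x hx))
    (hconv.sum_mem (fun i _ ↦ hp i) hp1 fun i _ ↦ hrR i) hr₀p (half_pos hε)
  have hw : 0 ≤ fun i ↦ p i / s i := fun i ↦ by
    by_cases hi : p i = 0
    · simp [hi]
    · exact div_nonneg (hp i) (hs i hi).le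
  obtain ⟨t, htR, ht⟩ := exists_exp_weights_of_weights hbdd hp hp1 hw
    (fun i hi ↦ div_pos ((hp i).lt_of_ne' hi) (hs i hi))
    (fun x hx ↦ by simpa only [div_mul_eq_mul_div, mul_div_assoc] using hsR x hx) (half_pos hε)
  refine ⟨t, htR, ht.trans ?_⟩
  have hinv (i) : Real.log (p i / s i) = -Real.log (s i / p i) := by rw [← Real.log_inv, inv_div]
  simp only [hinv, mul_neg, Finset.sum_neg_distrib]
  linarith

end FiniteDuality

lemma sum_birkhoffSum_iterate {X M : Type*} [AddCommMonoid M] (α : X → X) (φ : X → M)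
    (n k : ℕ) (x : X) :
    ∑ j ∈ Finset.range n, birkhoffSum α^[n] φ k (α^[j] x) = birkhoffSum α φ (n * k) x := by
  induction k with
  | zero => simp [birkhoffSum]
  | succ k ih =>
    simp only [birkhoffSum_succ, Finset.sum_add_distrib, ih, mul_add_one, birkhoffSum_add,
      ← Function.iterate_mul]
    simp only [birkhoffSum, ← Function.iterate_add_apply, add_comm]

lemma exp_birkhoffSum_mul_le {X : Type*} {n : ℕ} (hn : 0 < n) (α : X → X) (φ : X → ℝ) (k : ℕ)
    (x : X) :
    Real.exp (birkhoffSum α φ (n * k) x) ≤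
      (n : ℝ)⁻¹ * ∑ j ∈ Finset.range n,
        Real.exp (birkhoffSum α^[n] (fun y ↦ n * φ y) k (α^[j] x)) := by
  have hn0 : (n : ℝ) ≠ 0 := by positivity
  have hjensen := convexOn_exp.map_sum_le (t := Finset.range n) (w := fun _ ↦ (n : ℝ)⁻¹)
    (p := fun j ↦ birkhoffSum α^[n] (fun y ↦ n * φ y) k (α^[j] x)) (fun _ _ ↦ by positivity)
    (by simp [hn0]) (fun _ _ ↦ Set.mem_univ _)
  simp only [smul_eq_mul, ← Finset.mul_sum, sum_birkhoffSum_iterate] at hjensen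
  have hscale : birkhoffSum α (fun y ↦ n * φ y) (n * k) x = n * birkhoffSum α φ (n * k) x := by
    simp only [birkhoffSum, Finset.mul_sum]
  rwa [hscale, inv_mul_cancel_left₀ hn0] at hjensen

section WeightedShift

variable {X : Type*} [MeasurableSpace X] {m : Measure X}

section EssentiallyBounded

variable {α : X → X} {φ : X → ℝ}

lemma memLp_top_comp (hα : Measure.QuasiMeasurePreserving α m m) (hφ : MemLp φ ⊤ m) :
    MemLp (fun x ↦ φ (α x)) ⊤ m :=
  memLp_top_of_bound (hφ.1.comp_quasiMeasurePreserving hα) (lpNorm φ ⊤ m)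
    (hα.ae (ae_le_lpNorm_exponent_top hφ))

lemma memLp_top_exp (hφ : MemLp φ ⊤ m) : MemLp (fun x ↦ Real.exp (φ x)) ⊤ m := by
  refine memLp_top_of_bound (Real.continuous_exp.comp_aestronglyMeasurable hφ.1)
    (Real.exp (lpNorm φ ⊤ m)) ?_
  filter_upwards [ae_le_lpNorm_exponent_top hφ] with x hx
  simpa using (le_abs_self _).trans hx

lemma memLp_top_birkhoffSum (hα : Measure.QuasiMeasurePreserving α m m) (hφ : MemLp φ ⊤ m)
    (n : ℕ) : MemLp (birkhoffSum α φ n) ⊤ m :=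
  memLp_finsetSum _ fun i _ ↦ memLp_top_comp (hα.iterate i) hφ

lemma ae_birkhoffSum_le (hα : Measure.QuasiMeasurePreserving α m m) {b : ℝ}
    (hb : ∀ᵐ x ∂m, φ x ≤ b) (n : ℕ) : ∀ᵐ x ∂m, birkhoffSum α φ n x ≤ n * b := by
  have hiter : ∀ᵐ x ∂m, ∀ i, φ (α^[i] x) ≤ b := ae_all_iff.2 fun i ↦ (hα.iterate i).ae hb
  filter_upwards [hiter] with x hx
  simpa [birkhoffSum] using Finset.sum_le_card_nsmul (Finset.range n) _ b fun i _ ↦ hx i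

end EssentiallyBounded

namespace ShiftBounded

variable {α : X → X}

lemma exists_map_le (hb : ShiftBounded m α) (hα : Measurable α) :
    ∃ C : ℝ≥0, m.map α ≤ C • m := by
  obtain ⟨C, -, hC⟩ := hb
  refine ⟨C, Measure.le_iff.2 fun G hG ↦ ?_⟩
  rw [Measure.map_apply hα hG]
  exact hC G hG

lemma quasiMeasurePreserving (hb : ShiftBounded m α) (hα : Measurable α) :
    Measure.QuasiMeasurePreserving α m m := by
  obtain ⟨C, hC⟩ := hb.exists_map_le hα
  exact ⟨hα, (Measure.absolutelyContinuous_of_le hC).trans Measure.smul_absolutelyContinuous⟩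

lemma iterate (hb : ShiftBounded m α) (hα : Measurable α) (n : ℕ) : ShiftBounded m α^[n] := by
  obtain ⟨C, hC0, hC⟩ := hb
  refine ⟨C ^ n, pow_pos hC0 n, ?_⟩
  induction n with
  | zero => simp
  | succ n ih =>
    intro G hG
    rw [Function.iterate_succ', Set.preimage_comp, pow_succ]
    calc m (α^[n] ⁻¹' (α ⁻¹' G)) ≤ (C ^ n : ℝ≥0) * m (α ⁻¹' G) := ih _ (hα hG)
      _ ≤ (C ^ n : ℝ≥0) * (C * m G) := by gcongr; exact hC G hG
      _ = (C ^ n * C : ℝ≥0) * m G := by rw [ENNReal.coe_mul, mul_assoc]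

lemma integrable_comp (hb : ShiftBounded m α) (hα : Measurable α) {f : X → ℝ}
    (hf : Integrable f m) : Integrable (fun x ↦ f (α x)) m := by
  obtain ⟨C, hC⟩ := hb.exists_map_le hα
  exact (hf.of_measure_le_smul ENNReal.coe_ne_top hC).comp_measurable hα

lemma integrable_mul_abs_comp (hb : ShiftBounded m α) (hα : Measurable α) {w f : X → ℝ}
    (hw : MemLp w ⊤ m) (hf : Integrable f m) : Integrable (fun x ↦ w x * |f (α x)|) m :=
  (hb.integrable_comp hα hf).abs.mul_of_top_right hw

end ShiftBounded

/-- `‖w · (f ∘ β)‖₁ ≤ c · ‖f‖₁` for all `f ∈ L¹(X, m)`, for a nonnegative weight `w`: the operator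
`f ↦ w · (f ∘ β)` on `L¹(X, m)` has norm at most `c`. -/
def WeightedCompLE (m : Measure X) (β : X → X) (w : X → ℝ) (c : ℝ) : Prop :=
  ∀ f : X → ℝ, Integrable f m → ∫ x, w x * |f (β x)| ∂m ≤ c * ∫ x, |f x| ∂m

lemma ShiftBounded.exists_weightedCompLE {β : X → X} (hb : ShiftBounded m β) (hβ : Measurable β)
    {w : X → ℝ} (hw : MemLp w ⊤ m) : ∃ c ≥ 0, WeightedCompLE m β w c := by
  obtain ⟨C, hC⟩ := hb.exists_map_le hβ
  refine ⟨lpNorm w ⊤ m * C, mul_nonneg lpNorm_nonneg C.2, fun f hf ↦ ?_⟩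
  have hfabs : Integrable |f| (C • m) := hf.abs.smul_measure ENNReal.coe_ne_top
  calc ∫ x, w x * |f (β x)| ∂m ≤ ∫ x, lpNorm w ⊤ m * |f (β x)| ∂m := by
        refine integral_mono_ae (hb.integrable_mul_abs_comp hβ hw hf)
          ((hb.integrable_comp hβ hf).abs.const_mul _) ?_
        filter_upwards [ae_le_lpNorm_exponent_top hw] with x hx
        gcongr
        exact (le_abs_self _).trans hx
    _ = lpNorm w ⊤ m * ∫ x, |f| x ∂(m.map β) := by
        rw [integral_const_mul, integral_map hβ.aemeasurable (hfabs.mono_measure hC).1]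
        rfl
    _ ≤ lpNorm w ⊤ m * ∫ x, |f| x ∂(C • m) :=
        mul_le_mul_of_nonneg_left
          (integral_mono_measure hC (.of_forall (abs_nonneg f)) hfabs) lpNorm_nonneg
    _ = lpNorm w ⊤ m * C * ∫ x, |f x| ∂m := by
        rw [integral_smul_nnreal_measure, NNReal.smul_def, smul_eq_mul, mul_assoc]
        rfl

namespace WeightedCompLE

variable {β γ : X → X} {v w : X → ℝ} {c d : ℝ}

lemma mono (h : WeightedCompLE m β v c) (hb : ShiftBounded m β) (hβ : Measurable β)
    (hv : MemLp v ⊤ m) (hw : 0 ≤ᵐ[m] w) (hwv : w ≤ᵐ[m] v) : WeightedCompLE m β w c := fun f hf ↦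
  (integral_mono_of_nonneg (hw.mono fun _ hx ↦ mul_nonneg hx (abs_nonneg _))
    (hb.integrable_mul_abs_comp hβ hv hf)
    (hwv.mono fun _ hx ↦ mul_le_mul_of_nonneg_right hx (abs_nonneg _))).trans (h f hf)

lemma mono_const (h : WeightedCompLE m β w c) (hcd : c ≤ d) : WeightedCompLE m β w d := fun f hf ↦
  (h f hf).trans (by gcongr)

lemma const_mul (h : WeightedCompLE m β w c) {a : ℝ} (ha : 0 ≤ a) :
    WeightedCompLE m β (fun x ↦ a * w x) (a * c) := fun f hf ↦ by
  simp only [mul_assoc, integral_const_mul]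
  gcongr
  exact h f hf

lemma sum {ι : Type*} {s : Finset ι} {w : ι → X → ℝ} {c : ι → ℝ} (hb : ShiftBounded m β)
    (hβ : Measurable β) (hw : ∀ i ∈ s, MemLp (w i) ⊤ m)
    (h : ∀ i ∈ s, WeightedCompLE m β (w i) (c i)) :
    WeightedCompLE m β (fun x ↦ ∑ i ∈ s, w i x) (∑ i ∈ s, c i) := fun f hf ↦ by
  simp only [Finset.sum_mul]
  rw [integral_finsetSum s fun i hi ↦ hb.integrable_mul_abs_comp hβ (hw i hi) hf]
  exact Finset.sum_le_sum fun i hi ↦ h i hi f hf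

lemma comp (hw : WeightedCompLE m β w c) (hv : WeightedCompLE m γ v d) (hb : ShiftBounded m γ)
    (hγ : Measurable γ) (hvm : MemLp v ⊤ m) (hv0 : 0 ≤ v) (hc : 0 ≤ c) :
    WeightedCompLE m (γ ∘ β) (fun x ↦ w x * v (β x)) (c * d) := fun f hf ↦ by
  let F : X → ℝ := fun x ↦ v x * |f (γ x)|
  have hF (x) : |F x| = F x := abs_of_nonneg (mul_nonneg (hv0 x) (abs_nonneg _))
  calc ∫ x, w x * v (β x) * |f ((γ ∘ β) x)| ∂m = ∫ x, w x * |F (β x)| ∂m := by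
        simp only [hF, F, mul_assoc, Function.comp_apply]
    _ ≤ c * ∫ x, |F x| ∂m := hw _ (hb.integrable_mul_abs_comp hγ hvm hf)
    _ ≤ c * (d * ∫ x, |f x| ∂m) := by
        simp only [hF]
        gcongr
        exact hv f hf
    _ = c * d * ∫ x, |f x| ∂m := (mul_assoc _ _ _).symm

end WeightedCompLE

lemma weightedCompLE_iff_forall_integral_abs_eq_one {β : X → X}
    (hβ : Measure.QuasiMeasurePreserving β m m) {w : X → ℝ} {c : ℝ} :
    WeightedCompLE m β w c ↔
      ∀ f : X → ℝ, Integrable f m → ∫ x, |f x| ∂m = 1 → ∫ x, w x * |f (β x)| ∂m ≤ c := by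
  refine ⟨fun h f hf hf1 ↦ by simpa [hf1] using h f hf, fun h f hf ↦ ?_⟩
  have hnonneg : 0 ≤ ∫ x, |f x| ∂m := integral_nonneg fun x ↦ abs_nonneg (f x)
  obtain h0 | h0 := hnonneg.eq_or_lt'
  · have hf0 : |f| =ᵐ[m] 0 :=
      (integral_eq_zero_iff_of_nonneg (fun x ↦ abs_nonneg (f x)) hf.abs).1 h0
    have hfβ : (fun x ↦ w x * |f (β x)|) =ᵐ[m] 0 :=
      (hβ.ae hf0).mono fun x hx ↦ mul_eq_zero_of_right _ hx
    rw [h0, mul_zero, integral_congr_ae hfβ]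
    simp
  · have habs (x) : |(∫ x, |f x| ∂m)⁻¹ * f x| = (∫ x, |f x| ∂m)⁻¹ * |f x| := by
      rw [abs_mul, abs_of_pos (inv_pos.2 h0)]
    have hle := h (fun x ↦ (∫ x, |f x| ∂m)⁻¹ * f x) (hf.const_mul _) (by
      simp only [habs, integral_const_mul, inv_mul_cancel₀ h0.ne'])
    simp only [habs, fun x ↦ mul_left_comm (w x), integral_const_mul] at hle
    rwa [inv_mul_le_iff₀ h0, mul_comm] at hle

section GrowthBounds

variable {α : X → X} {φ ψ : X → ℝ}

/-- The real numbers `c` with `‖A_φⁿ‖ ≤ exp (n * c)` on `L¹(X, m)` for some `n > 0`. Their infimum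
is the spectral potential `λ(φ)`, and they remain meaningful when `λ(φ) = -∞`. -/
def growthBounds (m : Measure X) (α : X → X) (φ : X → ℝ) : Set ℝ :=
  {c | ∃ n > 0, WeightedCompLE m α^[n] (fun x ↦ Real.exp (birkhoffSum α φ n x)) (Real.exp (n * c))}

lemma weightedOpNorm_nonneg (φ : X → ℝ) (n : ℕ) : 0 ≤ weightedOpNorm m α 1 φ n := by
  refine Real.sSup_nonneg ?_
  rintro _ ⟨f, -, -, rfl⟩
  exact integral_nonneg fun x ↦ mul_nonneg (Real.exp_nonneg _) (abs_nonneg _)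

lemma weightedOpNorm_le_iff (hα : Measurable α) (hb : ShiftBounded m α) (hφ : MemLp φ ⊤ m)
    {n : ℕ} {c : ℝ} (hc : 0 ≤ c) :
    weightedOpNorm m α 1 φ n ≤ c ↔
      WeightedCompLE m α^[n] (fun x ↦ Real.exp (birkhoffSum α φ n x)) c := by
  have hbn := hb.iterate hα n
  have hαn := hα.iterate n
  have hqn := hbn.quasiMeasurePreserving hαn
  have hmem : MemLp (fun x ↦ Real.exp (birkhoffSum α φ n x)) ⊤ m :=
    memLp_top_exp (memLp_top_birkhoffSum (hb.quasiMeasurePreserving hα) hφ n)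
  simp only [weightedOpNorm, one_mul, weightedCompLE_iff_forall_integral_abs_eq_one hqn]
  refine ⟨fun h f hf hf1 ↦ h.trans' (le_csSup ?_ ⟨f, hf, hf1, rfl⟩), fun h ↦ Real.sSup_le ?_ hc⟩
  · obtain ⟨c, -, hc⟩ := hbn.exists_weightedCompLE hαn hmem
    refine ⟨c, ?_⟩
    rintro _ ⟨f, hf, hf1, rfl⟩
    exact (hc f hf).trans_eq (by rw [hf1, mul_one])
  · rintro _ ⟨f, hf, hf1, rfl⟩
    exact h f hf hf1

lemma weightedCompLE_weightedOpNorm (hα : Measurable α) (hb : ShiftBounded m α)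
    (hφ : MemLp φ ⊤ m) (n : ℕ) :
    WeightedCompLE m α^[n] (fun x ↦ Real.exp (birkhoffSum α φ n x)) (weightedOpNorm m α 1 φ n) :=
  (weightedOpNorm_le_iff hα hb hφ (weightedOpNorm_nonneg φ n)).1 le_rfl

lemma weightedOpNorm_add_le (hα : Measurable α) (hb : ShiftBounded m α) (hφ : MemLp φ ⊤ m)
    (n k : ℕ) :
    weightedOpNorm m α 1 φ (n + k) ≤ weightedOpNorm m α 1 φ n * weightedOpNorm m α 1 φ k := by
  have hn := weightedOpNorm_nonneg (m := m) (α := α) φ n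
  have hk := weightedOpNorm_nonneg (m := m) (α := α) φ k
  rw [weightedOpNorm_le_iff hα hb hφ (mul_nonneg hn hk)]
  have hcomp := (weightedCompLE_weightedOpNorm hα hb hφ n).comp
    (weightedCompLE_weightedOpNorm hα hb hφ k) (hb.iterate hα k) (hα.iterate k)
    (memLp_top_exp (memLp_top_birkhoffSum (hb.quasiMeasurePreserving hα) hφ k))
    (fun x ↦ Real.exp_nonneg _) hn
  simpa only [← Function.iterate_add, add_comm k n, ← Real.exp_add, ← birkhoffSum_add] using hcomp

lemma exists_weightedCompLE_exp_birkhoffSum (hα : Measurable α) (hb : ShiftBounded m α)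
    (hφ : MemLp φ ⊤ m) (hψ : MemLp ψ ⊤ m) :
    ∃ b : ℝ, ∀ (n : ℕ) (c : ℝ),
      WeightedCompLE m α^[n] (fun x ↦ Real.exp (birkhoffSum α φ n x)) c →
      WeightedCompLE m α^[n] (fun x ↦ Real.exp (birkhoffSum α ψ n x)) (Real.exp (n * b) * c) := by
  have hq := hb.quasiMeasurePreserving hα
  refine ⟨lpNorm (ψ - φ) ⊤ m, fun n c h ↦ (h.const_mul (Real.exp_nonneg _)).mono (hb.iterate hα n)
    (hα.iterate n) ((memLp_top_exp (memLp_top_birkhoffSum hq hφ n)).const_mul _)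
    (.of_forall fun x ↦ Real.exp_nonneg _) ?_⟩
  have hdiff := (ae_le_lpNorm_exponent_top (hψ.sub hφ)).mono fun x hx ↦ (le_abs_self _).trans hx
  filter_upwards [ae_birkhoffSum_le hq hdiff n] with x hx
  rw [← Real.exp_add, Real.exp_le_exp, ← sub_le_iff_le_add]
  simpa only [birkhoffSum_sub] using hx

lemma exists_add_mem_growthBounds (hα : Measurable α) (hb : ShiftBounded m α) (hφ : MemLp φ ⊤ m)
    (hψ : MemLp ψ ⊤ m) : ∃ b : ℝ, ∀ c ∈ growthBounds m α φ, b + c ∈ growthBounds m α ψ := by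
  obtain ⟨b, hcompare⟩ := exists_weightedCompLE_exp_birkhoffSum hα hb hφ hψ
  refine ⟨b, ?_⟩
  rintro c ⟨n, hn, hc⟩
  refine ⟨n, hn, ?_⟩
  rw [mul_add, Real.exp_add]
  exact hcompare n _ hc

lemma bddBelow_growthBounds_congr (hα : Measurable α) (hb : ShiftBounded m α) (hφ : MemLp φ ⊤ m)
    (hψ : MemLp ψ ⊤ m) (h : BddBelow (growthBounds m α φ)) : BddBelow (growthBounds m α ψ) := by
  obtain ⟨b, hadd⟩ := exists_add_mem_growthBounds hα hb hψ hφ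
  obtain ⟨L, hL⟩ := h
  exact ⟨L - b, fun c hc ↦ sub_le_iff_le_add'.2 (hL (hadd c hc))⟩

lemma weightedOpNorm_eq_zero_of_le (hα : Measurable α) (hb : ShiftBounded m α)
    (hφ : MemLp φ ⊤ m) {n k : ℕ} (hnk : n ≤ k) (h : weightedOpNorm m α 1 φ n = 0) :
    weightedOpNorm m α 1 φ k = 0 := by
  obtain ⟨j, rfl⟩ := exists_add_of_le hnk
  refine le_antisymm ?_ (weightedOpNorm_nonneg φ _)
  simpa only [h, zero_mul] using weightedOpNorm_add_le hα hb hφ n j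

lemma weightedOpNorm_eq_zero_congr (hα : Measurable α) (hb : ShiftBounded m α) (hφ : MemLp φ ⊤ m)
    (hψ : MemLp ψ ⊤ m) {n : ℕ} (h : weightedOpNorm m α 1 φ n = 0) :
    weightedOpNorm m α 1 ψ n = 0 := by
  obtain ⟨b, hcompare⟩ := exists_weightedCompLE_exp_birkhoffSum hα hb hφ hψ
  refine le_antisymm ?_ (weightedOpNorm_nonneg ψ n)
  rw [weightedOpNorm_le_iff hα hb hψ le_rfl]
  simpa only [h, mul_zero] using hcompare n _ (weightedCompLE_weightedOpNorm hα hb hφ n)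

end GrowthBounds

section SpectralPotential

variable {α : X → X} {φ ψ : X → ℝ}

lemma limUnder_congr {ι β : Type*} [TopologicalSpace β] [Nonempty β] {l : Filter ι} {u v : ι → β}
    (h : ∀ a, Tendsto u l (nhds a) ↔ Tendsto v l (nhds a)) : limUnder l u = limUnder l v :=
  congrArg Classical.epsilon (funext fun a ↦ propext (h a))

lemma mem_growthBounds_iff (hα : Measurable α) (hb : ShiftBounded m α) (hφ : MemLp φ ⊤ m) {c : ℝ} :
    c ∈ growthBounds m α φ ↔ ∃ n > 0, weightedOpNorm m α 1 φ n ≤ Real.exp (n * c) :=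
  exists_congr fun _ ↦ and_congr_right fun _ ↦
    (weightedOpNorm_le_iff hα hb hφ (Real.exp_nonneg _)).symm

lemma mem_growthBounds_iff_log_div_le (hα : Measurable α) (hb : ShiftBounded m α)
    (hφ : MemLp φ ⊤ m) (hpos : ∀ n, 0 < weightedOpNorm m α 1 φ n) {c : ℝ} :
    c ∈ growthBounds m α φ ↔ ∃ n : ℕ, 0 < n ∧ Real.log (weightedOpNorm m α 1 φ n) / n ≤ c := by
  rw [mem_growthBounds_iff hα hb hφ]
  refine exists_congr fun n ↦ and_congr_right fun hn ↦ ?_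
  rw [div_le_iff₀' (Nat.cast_pos.2 hn), Real.log_le_iff_le_exp (hpos n)]

lemma weightedOpNorm_pos_of_bddBelow (hα : Measurable α) (hb : ShiftBounded m α)
    (hφ : MemLp φ ⊤ m) (hbdd : BddBelow (growthBounds m α φ)) (n : ℕ) :
    0 < weightedOpNorm m α 1 φ n := by
  refine (weightedOpNorm_nonneg φ n).lt_of_ne' fun h0 ↦ ?_
  have huniv : growthBounds m α φ = Set.univ := Set.eq_univ_of_forall fun c ↦ by
    refine (mem_growthBounds_iff hα hb hφ).2 ⟨n + 1, n.succ_pos, ?_⟩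
    rw [weightedOpNorm_eq_zero_of_le hα hb hφ n.le_succ h0]
    exact Real.exp_nonneg _
  exact not_bddBelow_univ (huniv ▸ hbdd)

lemma isGLB_growthBounds (hα : Measurable α) (hb : ShiftBounded m α) (hφ : MemLp φ ⊤ m)
    (hbdd : BddBelow (growthBounds m α φ)) :
    IsGLB (growthBounds m α φ) (spectralPotential m α φ) := by
  have hpos := weightedOpNorm_pos_of_bddBelow hα hb hφ hbdd
  have hmem {c : ℝ} := mem_growthBounds_iff_log_div_le hα hb hφ hpos (c := c)
  have hsub : Subadditive fun n ↦ Real.log (weightedOpNorm m α 1 φ n) := fun n k ↦ by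
    rw [← Real.log_mul (hpos n).ne' (hpos k).ne']
    exact Real.log_le_log (hpos _) (weightedOpNorm_add_le hα hb hφ n k)
  obtain ⟨L, hL⟩ := hbdd
  have hrange : BddBelow (Set.range fun n : ℕ ↦ Real.log (weightedOpNorm m α 1 φ n) / n) := by
    refine ⟨min L 0, ?_⟩
    rintro _ ⟨n, rfl⟩
    obtain rfl | hn := n.eq_zero_or_pos
    · simp
    · exact min_le_of_left_le (hL (hmem.2 ⟨n, hn, le_rfl⟩))
  have hlim : spectralPotential m α φ = hsub.lim := (hsub.tendsto_lim hrange).limUnder_eq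
  rw [hlim]
  refine ⟨fun c hc ↦ ?_, fun a ha ↦ ?_⟩
  · obtain ⟨n, hn, hle⟩ := hmem.1 hc
    exact (hsub.lim_le_div hrange hn.ne').trans hle
  · refine ge_of_tendsto (hsub.tendsto_lim hrange) ?_
    filter_upwards [eventually_gt_atTop 0] with n hn using ha (hmem.2 ⟨n, hn, le_rfl⟩)

lemma bddBelow_growthBounds_of_tendsto (hα : Measurable α) (hb : ShiftBounded m α)
    (hφ : MemLp φ ⊤ m) (hpos : ∀ n, 0 < weightedOpNorm m α 1 φ n) {a : ℝ}
    (h : Tendsto (fun n : ℕ ↦ Real.log (weightedOpNorm m α 1 φ n) / n) atTop (nhds a)) :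
    BddBelow (growthBounds m α φ) := by
  obtain ⟨L, hL⟩ := h.bddBelow_range
  refine ⟨L, fun c hc ↦ ?_⟩
  obtain ⟨n, -, hn⟩ := (mem_growthBounds_iff_log_div_le hα hb hφ hpos).1 hc
  exact (hL ⟨n, rfl⟩).trans hn

/-- When the spectral radius vanishes, the mathematical value of `λ` is `-∞`, which `limUnder`
cannot express: `spectralPotential` then has a junk value, which does not depend on `φ`. -/
lemma spectralPotential_eq_of_not_bddBelow (hα : Measurable α) (hb : ShiftBounded m α)
    (hφ : MemLp φ ⊤ m) (hψ : MemLp ψ ⊤ m) (h : ¬ BddBelow (growthBounds m α φ)) :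
    spectralPotential m α φ = spectralPotential m α ψ := by
  refine limUnder_congr fun a ↦ ?_
  by_cases hzero : ∃ n, weightedOpNorm m α 1 φ n = 0
  · obtain ⟨n, hn⟩ := hzero
    refine tendsto_congr' ?_
    filter_upwards [eventually_ge_atTop n] with k hk
    rw [weightedOpNorm_eq_zero_of_le hα hb hφ hk hn, weightedOpNorm_eq_zero_of_le hα hb hψ hk
      (weightedOpNorm_eq_zero_congr hα hb hφ hψ hn)]
  · have hposφ (n) : 0 < weightedOpNorm m α 1 φ n :=
      (weightedOpNorm_nonneg φ n).lt_of_ne' fun h0 ↦ hzero ⟨n, h0⟩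
    have hposψ (n) : 0 < weightedOpNorm m α 1 ψ n :=
      (weightedOpNorm_nonneg ψ n).lt_of_ne' fun h0 ↦
        hzero ⟨n, weightedOpNorm_eq_zero_congr hα hb hψ hφ h0⟩
    exact iff_of_false (fun hlim ↦ h (bddBelow_growthBounds_of_tendsto hα hb hφ hposφ hlim))
      fun hlim ↦ h (bddBelow_growthBounds_congr hα hb hψ hφ
        (bddBelow_growthBounds_of_tendsto hα hb hψ hposψ hlim))

lemma iInf_toEReal_sub_of_isGLB {S : Set ℝ} {L : ℝ} (h : IsGLB S L) (a : ℝ) :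
    ⨅ c ∈ S, ((c - a : ℝ) : EReal) = ((L - a : ℝ) : EReal) := by
  refine le_antisymm (le_of_forall_gt fun b hb ↦ ?_)
    (le_iInf₂ fun c hc ↦ EReal.coe_le_coe (sub_le_sub_right (h.1 hc) a))
  obtain ⟨x, hLx, hxb⟩ := EReal.lt_iff_exists_real_btwn.1 hb
  obtain ⟨c, hc, hcx⟩ := (isGLB_lt_iff h).1 (sub_lt_iff_lt_add.1 (EReal.coe_lt_coe_iff.1 hLx))
  exact (iInf₂_le c hc).trans_lt
    ((EReal.coe_lt_coe_iff.2 (sub_lt_iff_lt_add.2 hcx)).trans hxb)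

lemma iInf_toEReal_sub_of_not_bddBelow {S : Set ℝ} (h : ¬ BddBelow S) (a : ℝ) :
    ⨅ c ∈ S, ((c - a : ℝ) : EReal) = ⊥ := by
  refine (EReal.eq_bot_iff_forall_lt _).2 fun x ↦ ?_
  obtain ⟨c, hc, hcx⟩ := not_bddBelow_iff.1 h (x + a)
  exact (iInf₂_le c hc).trans_lt (EReal.coe_lt_coe_iff.2 (sub_lt_iff_lt_add.2 hcx))

lemma iInf_growthBounds_sub_eq_iInf_spectralPotential_sub (hα : Measurable α)
    (hb : ShiftBounded m α) {μ : Lp ℝ ⊤ m →ₗ[ℝ] ℝ} (hμ : IsNormalizedFunctional m μ) :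
    ⨅ (φ : Lp ℝ ⊤ m), ⨅ c ∈ growthBounds m α φ, ((c - μ φ : ℝ) : EReal) =
      ⨅ φ : Lp ℝ ⊤ m, ((spectralPotential m α φ - μ φ : ℝ) : EReal) := by
  by_cases hbdd : BddBelow (growthBounds m α ((0 : Lp ℝ ⊤ m) : X → ℝ))
  · exact iInf_congr fun φ ↦ iInf_toEReal_sub_of_isGLB (isGLB_growthBounds hα hb (Lp.memLp φ)
      (bddBelow_growthBounds_congr hα hb (Lp.memLp 0) (Lp.memLp φ) hbdd)) _
  · let one : Lp ℝ ⊤ m := (memLp_top_const (1 : ℝ)).toLp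
    have hone (t : ℝ) : μ (t • one) = t := by
      rw [map_smul, hμ one (MemLp.coeFn_toLp _), smul_eq_mul, mul_one]
    refine Eq.trans (b := ⊥) ?_ ?_
    · exact le_bot_iff.1 ((iInf_le _ 0).trans (iInf_toEReal_sub_of_not_bddBelow hbdd _).le)
    · refine ((EReal.eq_bot_iff_forall_lt _).2 fun x ↦ ?_).symm
      let t : ℝ := spectralPotential m α ((0 : Lp ℝ ⊤ m) : X → ℝ) - x + 1
      refine (iInf_le _ (t • one)).trans_lt (EReal.coe_lt_coe_iff.2 ?_)
      rw [hone, ← spectralPotential_eq_of_not_bddBelow hα hb (Lp.memLp 0) (Lp.memLp _) hbdd]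
      linarith

end SpectralPotential

section Functionals

variable {α : X → X} {μ : Lp ℝ ⊤ m →ₗ[ℝ] ℝ}

lemma IsPositiveFunctional.mono (hμ : IsPositiveFunctional m μ) {φ ψ : Lp ℝ ⊤ m}
    (h : φ ≤ᵐ[m] ψ) : μ φ ≤ μ ψ := by
  rw [← sub_nonneg, ← map_sub]
  refine hμ _ ?_
  filter_upwards [h, Lp.coeFn_sub ψ φ] with x hx hsub
  rw [hsub]
  exact sub_nonneg.2 hx

lemma IsInvariantFunctional.map_birkhoffSum (hμ : IsInvariantFunctional m α μ)
    (hα : Measure.QuasiMeasurePreserving α m m) (φ : Lp ℝ ⊤ m) (n : ℕ) :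
    μ (memLp_top_birkhoffSum hα (Lp.memLp φ) n).toLp = n * μ φ := by
  induction n with
  | zero => simp [birkhoffSum_zero']
  | succ n ih =>
    have hmem := memLp_top_birkhoffSum hα (Lp.memLp φ) n
    have hsucc : (memLp_top_birkhoffSum hα (Lp.memLp φ) (n + 1)).toLp =
        φ + (memLp_top_comp hα hmem).toLp := by
      ext1
      filter_upwards [MemLp.coeFn_toLp (memLp_top_birkhoffSum hα (Lp.memLp φ) (n + 1)),
        MemLp.coeFn_toLp (memLp_top_comp hα hmem),
        Lp.coeFn_add φ (memLp_top_comp hα hmem).toLp] with x h₁ h₂ h₃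
      rw [h₁, h₃, Pi.add_apply, h₂, birkhoffSum_succ']
    have hinv : μ (memLp_top_comp hα hmem).toLp = μ hmem.toLp := hμ _ _ <| by
      filter_upwards [MemLp.coeFn_toLp (memLp_top_comp hα hmem),
        hα.ae (MemLp.coeFn_toLp hmem)] with x h₁ h₂
      rw [h₁, h₂]
    rw [hsucc, map_add, hinv, ih]
    push_cast
    ring

lemma coeFn_sum_smul {ι : Type*} [Fintype ι] (t : ι → ℝ) (g : ι → Lp ℝ ⊤ m) :
    ⇑(∑ i, t i • g i) =ᵐ[m] fun x ↦ ∑ i, t i * g i x := by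
  have hsmul : ∀ᵐ x ∂m, ∀ i, (t i • g i) x = t i * g i x :=
    ae_all_iff.2 fun i ↦ Lp.coeFn_smul (t i) (g i)
  filter_upwards [hsmul, Lp.coeFn_finsetSum Finset.univ fun i ↦ t i • g i] with x hx hsum
  simp only [hsum, Finset.sum_apply, hx]

lemma IsPositiveFunctional.map_le_sum_mul (hμ : IsPositiveFunctional m μ) {ι : Type*} [Fintype ι]
    {φ : Lp ℝ ⊤ m} {t : ι → ℝ} {g : ι → Lp ℝ ⊤ m} (h : ∀ᵐ x ∂m, φ x ≤ ∑ i, t i * g i x) :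
    μ φ ≤ ∑ i, μ (g i) * t i := by
  have hmono : μ φ ≤ μ (∑ i, t i • g i) := by
    refine hμ.mono ?_
    filter_upwards [h, coeFn_sum_smul t g] with x hx hsum
    rwa [hsum]
  simpa only [map_sum, map_smul, smul_eq_mul, mul_comm] using hmono

end Functionals

namespace PartUnity

variable {α β : X → X} {μ : Lp ℝ ⊤ m →ₗ[ℝ] ℝ} {n : ℕ} {c ε : ℝ}

lemma sum_map_eq_one (hμ : IsNormalizedFunctional m μ) (D : PartUnity m) :
    ∑ i, μ (D.g i) = 1 := by
  rw [← map_sum]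
  refine hμ _ ?_
  filter_upwards [D.sum_one, Lp.coeFn_finsetSum Finset.univ D.g] with x hx hsum
  rw [hsum, Finset.sum_apply, hx]

/-- The vectors `(∫ gᵢ · |f ∘ β| dm)ᵢ` with `f` in the unit sphere of `L¹(X, m)`; for `β = αⁿ` these
are the vectors over which `τₙ(μ, D)` is a supremum. -/
def massVectors (D : PartUnity m) (β : X → X) : Set (Fin D.k → ℝ) :=
  {r | ∃ f : X → ℝ, Integrable f m ∧ ∫ x, |f x| ∂m = 1 ∧ r = fun i ↦ ∫ x, D.g i x * |f (β x)| ∂m}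

lemma tauN_le_iff {D : PartUnity m} {μ : Lp ℝ ⊤ m → ℝ} {b : EReal} :
    tauN m α μ n D ≤ b ↔ ∀ r ∈ D.massVectors α^[n], ∑ i, entTerm (μ (D.g i)) (r i) ≤ b := by
  rw [tauN, sSup_le_iff]
  constructor
  · rintro h _ ⟨f, hf, hf1, rfl⟩
    exact h _ ⟨f, hf, hf1, rfl⟩
  · rintro h _ ⟨f, hf, hf1, rfl⟩
    exact h _ ⟨f, hf, hf1, rfl⟩

lemma massVectors_nonneg {D : PartUnity m} {r : Fin D.k → ℝ} (hr : r ∈ D.massVectors β) :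
    0 ≤ r := by
  obtain ⟨f, -, -, rfl⟩ := hr
  exact fun i ↦ integral_nonneg_of_ae <|
    (D.nonneg i).mono fun x hx ↦ mul_nonneg hx (abs_nonneg (f (β x)))

lemma isBounded_massVectors (D : PartUnity m) (hb : ShiftBounded m β) (hβ : Measurable β) :
    Bornology.IsBounded (D.massVectors β) := by
  choose c _ hc using fun i ↦ hb.exists_weightedCompLE hβ (Lp.memLp (D.g i))
  refine (Metric.isBounded_Icc 0 c).subset fun r hr ↦ ⟨massVectors_nonneg hr, fun i ↦ ?_⟩
  obtain ⟨f, hf, hf1, rfl⟩ := hr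
  simpa only [hf1, mul_one] using hc i f hf

lemma convex_massVectors (D : PartUnity m) (hb : ShiftBounded m β) (hβ : Measurable β) :
    Convex ℝ (D.massVectors β) := by
  rintro _ ⟨f₁, hf₁, h₁, rfl⟩ _ ⟨f₂, hf₂, h₂, rfl⟩ a b ha hb' hab
  have habs (x) : |(a * |f₁ x| + b * |f₂ x|)| = a * |f₁ x| + b * |f₂ x| :=
    abs_of_nonneg (by positivity)
  refine ⟨fun x ↦ a * |f₁ x| + b * |f₂ x|,
    (hf₁.abs.const_mul a).add (hf₂.abs.const_mul b), ?_, funext fun i ↦ ?_⟩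
  · simp only [habs]
    rw [integral_add (hf₁.abs.const_mul a) (hf₂.abs.const_mul b), integral_const_mul,
      integral_const_mul, h₁, h₂, mul_one, mul_one, hab]
  · simp only [habs, mul_add, mul_left_comm (D.g i _), Pi.add_apply, Pi.smul_apply, smul_eq_mul]
    rw [integral_add, integral_const_mul, integral_const_mul]
    · exact (hb.integrable_mul_abs_comp hβ (Lp.memLp (D.g i)) hf₁).const_mul a
    · exact (hb.integrable_mul_abs_comp hβ (Lp.memLp (D.g i)) hf₂).const_mul b

lemma weightedCompLE_one_iff_forall_massVectors (D : PartUnity m) (hb : ShiftBounded m β)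
    (hβ : Measurable β) {a : Fin D.k → ℝ} :
    WeightedCompLE m β (fun x ↦ ∑ i, a i * D.g i x) 1 ↔
      ∀ r ∈ D.massVectors β, ∑ i, a i * r i ≤ 1 := by
  have hintegral (f : X → ℝ) (hf : Integrable f m) :
      ∫ x, (∑ i, a i * D.g i x) * |f (β x)| ∂m = ∑ i, a i * ∫ x, D.g i x * |f (β x)| ∂m := by
    simp only [Finset.sum_mul, mul_assoc]
    rw [integral_finsetSum _ fun i _ ↦
      (hb.integrable_mul_abs_comp hβ (Lp.memLp (D.g i)) hf).const_mul (a i)]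
    simp only [integral_const_mul]
  rw [weightedCompLE_iff_forall_integral_abs_eq_one (hb.quasiMeasurePreserving hβ)]
  constructor
  · rintro h _ ⟨f, hf, hf1, rfl⟩
    simpa only [hintegral f hf] using h f hf hf1
  · intro h f hf hf1
    simpa only [hintegral f hf] using h _ ⟨f, hf, hf1, rfl⟩

lemma tauN_le_of_weightedCompLE (hα : Measurable α) (hb : ShiftBounded m α)
    (hpos : IsPositiveFunctional m μ) (hone : IsNormalizedFunctional m μ) {D : PartUnity m}
    {t : Fin D.k → ℝ} (h : WeightedCompLE m α^[n] (fun x ↦ ∑ i, Real.exp (t i) * D.g i x) 1) :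
    tauN m α μ n D ≤ ((-∑ i, μ (D.g i) * t i : ℝ) : EReal) :=
  tauN_le_iff.2 fun r hr ↦ sum_entTerm_le (fun i ↦ hpos _ (D.nonneg i)) (massVectors_nonneg hr)
    (D.sum_map_eq_one hone)
    ((D.weightedCompLE_one_iff_forall_massVectors (hb.iterate hα n) (hα.iterate n)).1 h r hr)

lemma exists_weightedCompLE_of_tauN_le (hα : Measurable α) (hb : ShiftBounded m α)
    (hpos : IsPositiveFunctional m μ) (hone : IsNormalizedFunctional m μ) {D : PartUnity m}
    (h : tauN m α μ n D ≤ c) (hε : 0 < ε) :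
    ∃ t : Fin D.k → ℝ, WeightedCompLE m α^[n] (fun x ↦ ∑ i, Real.exp (t i) * D.g i x) 1 ∧
      -∑ i, μ (D.g i) * t i ≤ c + ε := by
  have hbn := hb.iterate hα n
  have hαn := hα.iterate n
  obtain ⟨t, ht, hle⟩ := exists_exp_weights (D.convex_massVectors hbn hαn)
    (D.isBounded_massVectors hbn hαn) (fun r ↦ massVectors_nonneg)
    (fun i ↦ hpos _ (D.nonneg i)) (D.sum_map_eq_one hone) (tauN_le_iff.1 h) hε
  exact ⟨t, (D.weightedCompLE_one_iff_forall_massVectors hbn hαn).2 ht, hle⟩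

end PartUnity

section StepFunctions

variable {α : X → X} {μ : Lp ℝ ⊤ m →ₗ[ℝ] ℝ}

lemma memLp_top_indicator_one {s : Set X} (hs : MeasurableSet s) :
    MemLp (s.indicator fun _ ↦ (1 : ℝ)) ⊤ m :=
  (memLp_top_const 1).indicator hs

/-- The partition of unity by the indicator functions of the fibres of `s`; the linear combinations
of its members are the step functions that factor through `s`. -/
def PartUnity.ofFibers (m : Measure X) {k : ℕ} {s : X → Fin k} (hs : Measurable s) :
    PartUnity m where
  k := k
  g j := (memLp_top_indicator_one (hs (measurableSet_singleton j))).toLp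
  nonneg j := by
    filter_upwards [MemLp.coeFn_toLp (memLp_top_indicator_one (hs (measurableSet_singleton j)))]
      with x hx
    rw [hx]
    exact Set.indicator_nonneg (fun _ _ ↦ zero_le_one) x
  sum_one := by
    filter_upwards [ae_all_iff.2 fun j ↦
      MemLp.coeFn_toLp (memLp_top_indicator_one (hs (measurableSet_singleton j)))] with x hx
    simp [hx, Set.indicator]

lemma PartUnity.ae_sum_mul_ofFibers {k : ℕ} {s : X → Fin k} (hs : Measurable s) :
    ∀ᵐ x ∂m, ∀ w : Fin k → ℝ, ∑ j, w j * (ofFibers m hs).g j x = w (s x) := by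
  filter_upwards [ae_all_iff.2 fun j ↦
    MemLp.coeFn_toLp (memLp_top_indicator_one (hs (measurableSet_singleton j)))] with x hx w
  simp [ofFibers, hx, Set.indicator]

lemma exists_measurable_fin_approx (h : Lp ℝ ⊤ m) {ε : ℝ} (hε : 0 < ε) :
    ∃ (k : ℕ) (s : X → Fin k) (v : Fin k → ℝ), Measurable s ∧
      ∀ᵐ x ∂m, v (s x) ≤ h x ∧ h x ≤ v (s x) + ε := by
  let b : ℝ := lpNorm h ⊤ m
  let K : ℕ := ⌊2 * b / ε⌋₊
  refine ⟨K + 1, fun x ↦ Fin.ofNat (K + 1) ⌊(h x + b) / ε⌋₊, fun i ↦ -b + i * ε, ?_, ?_⟩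
  · have hfloor : Measurable fun x ↦ ⌊(h x + b) / ε⌋₊ :=
      (((Lp.stronglyMeasurable h).measurable.add_const b).div_const ε).nat_floor
    exact (Measurable.of_discrete (f := Fin.ofNat (K + 1))).comp hfloor
  filter_upwards [ae_le_lpNorm_exponent_top (Lp.memLp h)] with x hx
  obtain ⟨hlower, hupper⟩ := abs_le.1 hx
  have hnonneg : 0 ≤ (h x + b) / ε := div_nonneg (by linarith) hε.le
  have hindex : ((Fin.ofNat (K + 1) ⌊(h x + b) / ε⌋₊ : Fin (K + 1)) : ℕ) = ⌊(h x + b) / ε⌋₊ := by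
    refine Nat.mod_eq_of_lt (Nat.lt_succ_of_le (Nat.floor_le_floor ?_))
    gcongr
    linarith
  have hfloor := (le_div_iff₀ hε).1 (Nat.floor_le hnonneg)
  have hceil := (div_lt_iff₀ hε).1 (Nat.lt_floor_add_one ((h x + b) / ε))
  simp only [hindex]
  constructor <;> linarith

lemma PartUnity.exists_step_approx (h : Lp ℝ ⊤ m) {ε : ℝ} (hε : 0 < ε) :
    ∃ (D : PartUnity m) (v : Fin D.k → ℝ), ∀ᵐ x ∂m, ∃ j,
      (∀ w : Fin D.k → ℝ, ∑ i, w i * D.g i x = w j) ∧ v j ≤ h x ∧ h x ≤ v j + ε := by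
  obtain ⟨k, s, v, hs, hsv⟩ := exists_measurable_fin_approx h hε
  refine ⟨ofFibers m hs, v, ?_⟩
  filter_upwards [hsv, ae_sum_mul_ofFibers hs] with x hx hsum
  exact ⟨s x, hsum, hx⟩

lemma tEntropy_le_of_tauN_le {n : ℕ} (hn : 0 < n) {μ : Lp ℝ ⊤ m → ℝ} {D : PartUnity m} {c : ℝ}
    (h : tauN m α μ n D ≤ (n * c : ℝ)) : tEntropy m α μ ≤ c := by
  refine (iInf₂_le_of_le n hn (iInf_le _ D)).trans ?_
  calc (((n : ℝ)⁻¹ : ℝ) : EReal) * tauN m α μ n D ≤ ((n : ℝ)⁻¹ : ℝ) * (n * c : ℝ) :=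
        mul_le_mul_of_nonneg_left h (by positivity)
    _ = c := by rw [← EReal.coe_mul, inv_mul_cancel_left₀ (by positivity)]

lemma exists_tauN_le_of_tEntropy_lt {μ : Lp ℝ ⊤ m → ℝ} {c : ℝ} (h : tEntropy m α μ < c) :
    ∃ n > 0, ∃ D : PartUnity m, tauN m α μ n D ≤ (n * c : ℝ) := by
  simp only [tEntropy, iInf_lt_iff] at h
  obtain ⟨n, hn, D, hlt⟩ := h
  refine ⟨n, hn, D, ?_⟩
  calc tauN m α μ n D = (n : ℝ) * ((((n : ℝ)⁻¹ : ℝ) : EReal) * tauN m α μ n D) := by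
        rw [← mul_assoc, ← EReal.coe_mul, mul_inv_cancel₀ (by positivity), EReal.coe_one, one_mul]
    _ ≤ (n : ℝ) * c := mul_le_mul_of_nonneg_left hlt.le (by positivity)
    _ = (n * c : ℝ) := (EReal.coe_mul _ _).symm

lemma tEntropy_le_of_mem_growthBounds (hα : Measurable α) (hb : ShiftBounded m α)
    (hμ : MemMalpha m α μ) (φ : Lp ℝ ⊤ m) {c : ℝ} (hc : c ∈ growthBounds m α φ) :
    tEntropy m α μ ≤ (c - μ φ : ℝ) := by
  obtain ⟨hpos, hone, hinv⟩ := hμ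
  obtain ⟨n, hn, hle⟩ := hc
  have hq := hb.quasiMeasurePreserving hα
  have hmem := memLp_top_birkhoffSum hq (Lp.memLp φ) n
  refine EReal.le_of_forall_lt_iff_le.1 fun z hz ↦ ?_
  rw [EReal.coe_lt_coe_iff] at hz
  have hn0 : (0 : ℝ) < n := Nat.cast_pos.2 hn
  obtain ⟨D, v, hv⟩ := PartUnity.exists_step_approx hmem.toLp (mul_pos hn0 (sub_pos.2 hz))
  have hbound : WeightedCompLE m α^[n] (fun x ↦ ∑ i, Real.exp (v i - n * c) * D.g i x) 1 := by
    have hscaled := hle.const_mul (Real.exp_nonneg (-(n * c)))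
    rw [← Real.exp_add, neg_add_cancel, Real.exp_zero] at hscaled
    refine hscaled.mono (hb.iterate hα n) (hα.iterate n)
      ((memLp_top_exp hmem).const_mul _) ?_ ?_
    · filter_upwards [hv] with x ⟨j, hsum, _⟩
      rw [hsum]
      exact Real.exp_nonneg _
    · filter_upwards [hv, MemLp.coeFn_toLp hmem] with x ⟨j, hsum, hlower, _⟩ hx
      rw [hsum, ← Real.exp_add, Real.exp_le_exp, ← hx]
      linarith
  refine tEntropy_le_of_tauN_le hn
    ((PartUnity.tauN_le_of_weightedCompLE hα hb hpos hone hbound).trans ?_)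
  have hval : n * μ φ ≤ ∑ i, μ (D.g i) * (v i + n * (z - (c - μ φ))) := by
    rw [← hinv.map_birkhoffSum hq φ n]
    refine hpos.map_le_sum_mul ?_
    filter_upwards [hv] with x ⟨j, hsum, _, hupper⟩
    rw [hsum fun i ↦ v i + n * (z - (c - μ φ))]
    exact hupper
  simp only [mul_add, mul_sub, Finset.sum_add_distrib, Finset.sum_sub_distrib,
    ← Finset.sum_mul, D.sum_map_eq_one hone] at hval ⊢
  rw [EReal.coe_le_coe_iff]
  linarith

end StepFunctions

section Averaging

variable {α β : X → X} {φ ψ : X → ℝ} {n : ℕ} {c : ℝ}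

lemma WeightedCompLE.iterate (hb : ShiftBounded m β) (hβ : Measurable β) (hψ : MemLp ψ ⊤ m)
    (h : WeightedCompLE m β (fun x ↦ Real.exp (ψ x)) 1) (k : ℕ) :
    WeightedCompLE m β^[k] (fun x ↦ Real.exp (birkhoffSum β ψ k x)) 1 := by
  induction k with
  | zero => exact fun f _ ↦ by simp
  | succ k ih =>
    have hmem := memLp_top_exp (memLp_top_birkhoffSum (hb.quasiMeasurePreserving hβ) hψ k)
    simpa only [Function.iterate_succ, birkhoffSum_succ', Real.exp_add, mul_one] using
      h.comp ih (hb.iterate hβ k) (hβ.iterate k) hmem (fun x ↦ Real.exp_nonneg _) zero_le_one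

lemma exists_weightedCompLE_comp_iterate (hα : Measurable α) (hb : ShiftBounded m α)
    (hψ : MemLp ψ ⊤ m) (h : WeightedCompLE m α^[n] (fun x ↦ Real.exp (ψ x)) 1) {j : ℕ}
    (hj : j ≤ n) :
    ∃ C, ∀ k, WeightedCompLE m α^[n * (k + 1)]
      (fun x ↦ Real.exp (birkhoffSum α^[n] ψ k (α^[j] x))) C := by
  have hone : MemLp (fun _ ↦ (1 : ℝ)) ⊤ m := memLp_top_const 1
  have hbn := hb.iterate hα n
  have hαn := hα.iterate n
  obtain ⟨C, hC, hfirst⟩ := (hb.iterate hα j).exists_weightedCompLE (hα.iterate j) hone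
  obtain ⟨D, -, hlast⟩ := (hb.iterate hα (n - j)).exists_weightedCompLE (hα.iterate (n - j)) hone
  refine ⟨C * (1 * D), fun k ↦ ?_⟩
  have hmem := memLp_top_exp (memLp_top_birkhoffSum (hbn.quasiMeasurePreserving hαn) hψ k)
  have hiter : α^[n * (k + 1)] = (α^[n - j] ∘ (α^[n])^[k]) ∘ α^[j] := by
    rw [← Function.iterate_mul, ← Function.iterate_add, ← Function.iterate_add]
    congr 1
    rw [mul_add_one]
    omega
  have htail := (h.iterate hbn hαn hψ k).comp hlast (hb.iterate hα (n - j))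
    (hα.iterate (n - j)) hone (fun _ ↦ zero_le_one) zero_le_one
  have hbtail : ShiftBounded m (α^[n - j] ∘ (α^[n])^[k]) := by
    rw [← Function.iterate_mul, ← Function.iterate_add]
    exact hb.iterate hα _
  rw [hiter]
  simpa only [one_mul, mul_one] using hfirst.comp htail hbtail
    ((hα.iterate (n - j)).comp (hαn.iterate k)) (hmem.mul_const 1)
    (fun x ↦ mul_nonneg (Real.exp_nonneg _) zero_le_one) hC

lemma exists_forall_weightedCompLE_of_iterate (hα : Measurable α) (hb : ShiftBounded m α)
    (hφ : MemLp φ ⊤ m) (hn : 0 < n)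
    (h : WeightedCompLE m α^[n] (fun x ↦ Real.exp (n * φ x)) 1) :
    ∃ C, ∀ k, WeightedCompLE m α^[n * (k + 1)]
      (fun x ↦ Real.exp (birkhoffSum α φ (n * (k + 1)) x)) C := by
  have hq := hb.quasiMeasurePreserving hα
  have hnφ : MemLp (fun x ↦ n * φ x) ⊤ m := hφ.const_mul n
  choose! C hC using fun j (hj : j ≤ n) ↦ exists_weightedCompLE_comp_iterate hα hb hnφ h hj
  let B := lpNorm φ ⊤ m
  refine ⟨Real.exp (n * B) * ((n : ℝ)⁻¹ * ∑ j ∈ Finset.range n, C j), fun k ↦ ?_⟩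
  have hbk := hb.iterate hα (n * (k + 1))
  have hαk := hα.iterate (n * (k + 1))
  have hmem (j : ℕ) : MemLp (fun x ↦ Real.exp (birkhoffSum α^[n] (fun y ↦ n * φ y) k (α^[j] x)))
      ⊤ m := memLp_top_comp (hq.iterate j) (memLp_top_exp
        (memLp_top_birkhoffSum (hq.iterate n) hnφ k))
  have hsum := WeightedCompLE.sum hbk hαk (fun j _ ↦ hmem j)
    fun j hj ↦ hC j (Finset.mem_range.1 hj).le k
  have hblock : ∀ᵐ x ∂m, birkhoffSum α φ n (α^[n * k] x) ≤ n * B :=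
    (hq.iterate (n * k)).ae <| ae_birkhoffSum_le hq
      ((ae_le_lpNorm_exponent_top hφ).mono fun x hx ↦ (le_abs_self _).trans hx) n
  refine ((hsum.const_mul (a := (n : ℝ)⁻¹) (by positivity)).const_mul
    (Real.exp_nonneg (n * B))).mono hbk hαk
    (((memLp_finsetSum _ fun j _ ↦ hmem j).const_mul _).const_mul _)
    (.of_forall fun x ↦ Real.exp_nonneg _) ?_
  filter_upwards [hblock] with x hx
  rw [mul_add_one, birkhoffSum_add, add_comm, Real.exp_add]
  gcongr
  exact exp_birkhoffSum_mul_le hn α φ k x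

lemma mem_growthBounds_of_weightedCompLE (hα : Measurable α) (hb : ShiftBounded m α)
    (hφ : MemLp φ ⊤ m) (hn : 0 < n)
    (h : WeightedCompLE m α^[n] (fun x ↦ Real.exp (n * φ x)) 1) (hc : 0 < c) :
    c ∈ growthBounds m α φ := by
  obtain ⟨C, hC⟩ := exists_forall_weightedCompLE_of_iterate hα hb hφ hn h
  obtain ⟨k, hk⟩ := exists_nat_ge (C / c)
  refine ⟨n * (k + 1), by positivity, (hC k).mono_const ?_⟩
  have hkn : (k : ℝ) ≤ (n * (k + 1) : ℕ) :=
    Nat.cast_le.2 ((Nat.le_succ k).trans (Nat.le_mul_of_pos_left _ hn))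
  calc C ≤ k * c := (div_le_iff₀ hc).1 hk
    _ ≤ (n * (k + 1) : ℕ) * c := by gcongr
    _ ≤ Real.exp ((n * (k + 1) : ℕ) * c) := (lt_add_one _).le.trans (Real.add_one_le_exp _)

end Averaging

section VariationalPrinciple

variable {α : X → X} {μ : Lp ℝ ⊤ m →ₗ[ℝ] ℝ}

lemma PartUnity.ae_exp_sum_mul_le (D : PartUnity m) (t : Fin D.k → ℝ) :
    ∀ᵐ x ∂m, Real.exp (∑ i, t i * D.g i x) ≤ ∑ i, Real.exp (t i) * D.g i x := by
  filter_upwards [ae_all_iff.2 D.nonneg, D.sum_one] with x hnonneg hsum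
  simpa only [smul_eq_mul, mul_comm] using
    convexOn_exp.map_sum_le (t := Finset.univ) (p := t) (fun i _ ↦ hnonneg i) hsum
      (fun _ _ ↦ Set.mem_univ _)

lemma exists_mem_growthBounds_of_tEntropy_lt (hα : Measurable α) (hb : ShiftBounded m α)
    (hpos : IsPositiveFunctional m μ) (hone : IsNormalizedFunctional m μ) {c d : ℝ}
    (hc : tEntropy m α μ < c) (hcd : c < d) :
    ∃ φ : Lp ℝ ⊤ m, ∃ b ∈ growthBounds m α φ, b - μ φ ≤ d := by
  obtain ⟨n, hn, D, hD⟩ := exists_tauN_le_of_tEntropy_lt hc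
  have hn0 : (0 : ℝ) < n := Nat.cast_pos.2 hn
  have hε : 0 < (d - c) / 2 := by linarith
  obtain ⟨t, ht, hle⟩ :=
    PartUnity.exists_weightedCompLE_of_tauN_le hα hb hpos hone hD (mul_pos hn0 hε)
  let φ : Lp ℝ ⊤ m := (n : ℝ)⁻¹ • ∑ i, t i • D.g i
  have hφ : ∀ᵐ x ∂m, n * φ x = ∑ i, t i * D.g i x := by
    filter_upwards [coeFn_sum_smul t D.g, Lp.coeFn_smul (n : ℝ)⁻¹ (∑ i, t i • D.g i)]
      with x hsum hsmul
    rw [hsmul, Pi.smul_apply, smul_eq_mul, mul_inv_cancel_left₀ hn0.ne', hsum]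
  have hexp : WeightedCompLE m α^[n] (fun x ↦ Real.exp (n * φ x)) 1 := by
    refine ht.mono (hb.iterate hα n) (hα.iterate n)
      (memLp_finsetSum _ fun i _ ↦ (Lp.memLp (D.g i)).const_mul _)
      (.of_forall fun x ↦ Real.exp_nonneg _) ?_
    filter_upwards [hφ, D.ae_exp_sum_mul_le t] with x hx hconv
    rwa [hx]
  refine ⟨φ, (d - c) / 2,
    mem_growthBounds_of_weightedCompLE hα hb (Lp.memLp φ) hn hexp hε, ?_⟩
  have hval : n * μ φ = ∑ i, μ (D.g i) * t i := by
    simp only [φ, map_smul, map_sum, smul_eq_mul, mul_inv_cancel_left₀ hn0.ne', mul_comm]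
  refine le_of_mul_le_mul_left ?_ hn0
  linarith

lemma tEntropy_eq_iInf_growthBounds (hα : Measurable α) (hb : ShiftBounded m α)
    (hμ : MemMalpha m α μ) :
    tEntropy m α μ = ⨅ φ : Lp ℝ ⊤ m, ⨅ c ∈ growthBounds m α φ, ((c - μ φ : ℝ) : EReal) := by
  refine le_antisymm (le_iInf fun φ ↦ le_iInf₂ fun c hc ↦
    tEntropy_le_of_mem_growthBounds hα hb hμ φ hc) (EReal.le_of_forall_lt_iff_le.1 fun d hd ↦ ?_)
  obtain ⟨c, hc, hcd⟩ := EReal.lt_iff_exists_real_btwn.1 hd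
  obtain ⟨φ, b, hbound, hle⟩ := exists_mem_growthBounds_of_tEntropy_lt hα hb hμ.1 hμ.2.1 hc
    (EReal.coe_lt_coe_iff.1 hcd)
  exact (iInf_le_of_le φ (iInf₂_le b hbound)).trans (EReal.coe_le_coe_iff.2 hle)

end VariationalPrinciple

end WeightedShift

/-- **Theorem 1 (variational principle for t-entropy)**:
`τ(μ) = inf_{φ ∈ L^∞(X, m)} (λ(φ) − μ[φ])` for every `μ ∈ M_α(X, m)`. -/
theorem variational_principle_tEntropy
    {X : Type*} [MeasurableSpace X] (m : Measure X) (α : X → X)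
    (hα : Measurable α) (hbdd : ShiftBounded m α)
    (μ : Lp ℝ ⊤ m →L[ℝ] ℝ) (hμ : MemMalpha m α ⇑μ) :
    tEntropy m α (⇑μ) =
      ⨅ φ : Lp ℝ ⊤ m, ((spectralPotential m α (⇑φ) - μ φ : ℝ) : EReal) := by
  have hentropy := tEntropy_eq_iInf_growthBounds (μ := μ.toLinearMap) hα hbdd hμ
  have hpotential := iInf_growthBounds_sub_eq_iInf_spectralPotential_sub (μ := μ.toLinearMap)
    hα hbdd hμ.2.1
  exact hentropy.trans hpotential

end
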